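/- The sum over all partitions λ ⊆ n^m with |λ| = p of s_λ(1^m) · s_{λ'}(1^n) equals C(mn, p) (the dimension of Λ^p(ℂ^m ⊗ ℂ^n)). -/

import Mathlib

open YoungDiagram Finset

/-- The rectangular Young diagram with `m` rows and `n` columns. -/
def rect (m n : ℕ) : YoungDiagram where
  cells := Finset.range m ×ˢ Finset.range n
  isLowerSet := by
    rintro ⟨a1, a2⟩ ⟨b1, b2⟩ ⟨h1, h2⟩ hb
    simp only [Finset.coe_product, Set.mem_prod, Finset.mem_coe, Finset.mem_range] at *
    exact ⟨lt_of_le_of_lt h1 hb.1, lt_of_le_of_lt h2 hb.2⟩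

/-- The 180°-rotated complement of a Young diagram `μ` inside the rectangle with
`m` rows and `n` columns: its row lengths are `n - μ.rowLen (m-1-i)`. -/
def complement (m n : ℕ) (μ : YoungDiagram) : YoungDiagram where
  cells := (Finset.range m ×ˢ Finset.range n).filter fun p => p.2 < n - μ.rowLen (m - 1 - p.1)
  isLowerSet := by
    rintro ⟨a1, a2⟩ ⟨b1, b2⟩ ⟨h1, h2⟩ hb
    simp only [Finset.coe_filter, Set.mem_setOf_eq, Finset.mem_product, Finset.mem_range] at *
    refine ⟨⟨lt_of_le_of_lt h1 hb.1.1, lt_of_le_of_lt h2 hb.1.2⟩, ?_⟩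
    calc b2 ≤ a2 := h2
      _ < n - μ.rowLen (m - 1 - a1) := hb.2
      _ ≤ n - μ.rowLen (m - 1 - b1) :=
          Nat.sub_le_sub_left (μ.rowLen_anti _ _ (Nat.sub_le_sub_left h1 _)) n

/-- The hook length of the cell `c` in the Young diagram `μ` (arm + leg + 1). -/
def hookLength (μ : YoungDiagram) (c : ℕ × ℕ) : ℕ :=
  (μ.rowLen c.1 - c.2) + (μ.colLen c.2 - c.1) - 1

/-- The product of all hook lengths of `μ`. -/
def hookProd (μ : YoungDiagram) : ℕ := ∏ c ∈ μ.cells, hookLength μ c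

/-- The number of semistandard Young tableaux of shape `μ` with entries in `{0, …, k-1}`;
this equals `s_μ(1^k) = dim S^μ(ℂ^k)`. -/
noncomputable def ssytCount (μ : YoungDiagram) (k : ℕ) : ℕ :=
  Set.ncard {T : SemistandardYoungTableau μ | ∀ i j, (i, j) ∈ μ → T i j < k}

/-- `T : ℕ × ℕ → ℕ` is a standard Young tableau of shape `μ` (with entries `0, …, |μ|-1`):
it is a bijection from the cells of `μ` to `{0, …, |μ|-1}`, strictly increasing along
rows and columns, and zero outside `μ`. -/
def IsSyt (μ : YoungDiagram) (T : ℕ × ℕ → ℕ) : Prop :=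
  Set.BijOn T (μ.cells : Set (ℕ × ℕ)) (Finset.range μ.card : Set ℕ) ∧
  (∀ i j, (i, j + 1) ∈ μ → T (i, j) < T (i, j + 1)) ∧
  (∀ i j, (i + 1, j) ∈ μ → T (i, j) < T (i + 1, j)) ∧
  (∀ c, c ∉ μ → T c = 0)

/-- The number of standard Young tableaux of shape `μ`, i.e. `f^μ`. -/
noncomputable def sytCount (μ : YoungDiagram) : ℕ := Set.ncard {T | IsSyt μ T}

/-! Write `s_μ(x; k)` for the Schur function of `μ` in the variables `x 0, …, x (k - 1)`. The
theorem is the coefficient of `t ^ p` in the dual Cauchy identity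
`∑ s_μ(x; m) s_μ'(y; n) = ∏ (1 + x i * y j)` at `x = t`, `y = 1`.

Removing the largest possible entry from a tableau removes a horizontal strip, so `s_μ(x; k)` is an
iterated sum of one-variable skew Schur functions. Hence everything follows from the one-variable
skew identity `∑_ρ s_{ρ/μ}(x) s_{ρ'/ν'}(y) = (1 + x * y) ∑_κ s_{ν/κ}(x) s_{μ'/κ'}(y)`: iterated over
the variables `x i` it gives the dual Pieri rule, and iterating that over the `y j` gives the Cauchy
identity. In the skew identity the rows of `ρ`, and those of `κ`, can be chosen independently of
each other, so both sides are products over rows, and these products agree by telescoping. -/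

theorem Iic_bot_eq_singleton {α : Type*} [PartialOrder α] [OrderBot α] [LocallyFiniteOrderBot α] :
    Iic (⊥ : α) = {⊥} := by
  ext a
  simp

section Diagrams

variable {κ μ : YoungDiagram} {m n M : ℕ}

noncomputable instance : LocallyFiniteOrderBot YoungDiagram := by
  classical
  refine LocallyFiniteOrderBot.ofIic _ (fun μ => (Set.Finite.of_injOn (s := Set.Iic μ)
    (f := YoungDiagram.cells) (t := μ.cells.powerset) ?_ ?_ (finite_toSet _)).toFinset) (by simp)
  · exact fun κ hκ => mem_powerset.2 (cells_subset_iff.2 hκ)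
  · exact fun κ _ κ' _ h => YoungDiagram.ext h

theorem transpose_bot : (⊥ : YoungDiagram).transpose = ⊥ :=
  transposeOrderIso.map_bot

theorem card_transpose (μ : YoungDiagram) : μ.transpose.card = μ.card :=
  card_map _

theorem le_iff_rowLen_le : κ ≤ μ ↔ ∀ i, κ.rowLen i ≤ μ.rowLen i := by
  refine ⟨fun h i => le_of_forall_lt fun j hj => ?_, fun h c hc => ?_⟩
  · exact mem_iff_lt_rowLen.1 (h (mem_iff_lt_rowLen.2 hj))
  · exact mem_iff_lt_rowLen.2 ((mem_iff_lt_rowLen.1 hc).trans_le (h c.1))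

theorem rowLen_eq_zero_of_le (h : μ.rowLen M = 0) {i : ℕ} (hi : M ≤ i) : μ.rowLen i = 0 :=
  Nat.eq_zero_of_le_zero (h ▸ μ.rowLen_anti M i hi)

theorem card_eq_sum_rowLen (h : μ.rowLen M = 0) : μ.card = ∑ i ∈ range M, μ.rowLen i := by
  have hrow : Set.MapsTo Prod.fst (μ.cells : Set (ℕ × ℕ)) (range M) := by
    intro c hc
    have hlt : c.2 < μ.rowLen c.1 := mem_iff_lt_rowLen.1 hc
    by_contra! hM
    have := rowLen_eq_zero_of_le h (not_lt.1 fun hc' => hM (mem_coe.2 (mem_range.2 hc')))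
    omega
  simp only [rowLen_eq_card]
  exact card_eq_sum_card_fiberwise hrow

theorem exists_rowLen_eq (v : Fin m → ℕ) (hv : Antitone v) :
    ∃ μ : YoungDiagram, (∀ i : Fin m, μ.rowLen i = v i) ∧ μ.rowLen m = 0 := by
  refine ⟨ofRowLens (List.ofFn v) hv.sortedGE_ofFn, fun i => ?_, ?_⟩
  · simpa using rowLen_ofRowLens (hw := hv.sortedGE_ofFn) (i.cast List.length_ofFn.symm)
  · by_contra! h
    have := mem_ofRowLens.1 (mem_iff_lt_rowLen.2 (Nat.pos_of_ne_zero h))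
    simp at this

theorem mem_rect {c : ℕ × ℕ} : c ∈ rect m n ↔ c.1 < m ∧ c.2 < n := by
  simp [← mem_cells, rect]

theorem transpose_rect (m n : ℕ) : (rect m n).transpose = rect n m := by
  ext c
  simp [mem_rect, and_comm]

theorem rect_zero_left (n : ℕ) : rect 0 n = ⊥ := by
  ext c
  simp [mem_rect]

theorem rect_zero_right (m : ℕ) : rect m 0 = ⊥ := by
  ext c
  simp [mem_rect]

theorem rect_mono {m' n' : ℕ} (hm : m ≤ m') (hn : n ≤ n') : rect m n ≤ rect m' n' := fun _ hc =>
  mem_rect.2 ⟨(mem_rect.1 hc).1.trans_le hm, (mem_rect.1 hc).2.trans_le hn⟩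

theorem le_rect_iff : μ ≤ rect m n ↔ μ.rowLen m = 0 ∧ ∀ i, μ.rowLen i ≤ n := by
  refine ⟨fun h => ⟨?_, fun i => ?_⟩, fun ⟨hm, hn⟩ c hc => ?_⟩
  · by_contra! h0
    exact (mem_rect.1 (h (mem_iff_lt_rowLen.2 (Nat.pos_of_ne_zero h0)))).1.false
  · exact le_of_forall_lt fun j hj => (mem_rect.1 (h (mem_iff_lt_rowLen.2 hj))).2
  · have hlt : c.2 < μ.rowLen c.1 := mem_iff_lt_rowLen.1 hc
    refine mem_rect.2 ⟨?_, hlt.trans_le (hn c.1)⟩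
    by_contra! hM
    have := rowLen_eq_zero_of_le hm hM
    omega

/-- The skew shape `μ / κ` is a horizontal strip: it has at most one cell in each column. -/
def IsHorizontalStrip (κ μ : YoungDiagram) : Prop :=
  κ ≤ μ ∧ ∀ i j, (i + 1, j) ∈ μ → (i, j) ∈ κ

theorem isHorizontalStrip_self (μ : YoungDiagram) : IsHorizontalStrip μ μ :=
  ⟨le_rfl, fun i _ h => μ.up_left_mem i.le_succ le_rfl h⟩

theorem isHorizontalStrip_iff_rowLen :
    IsHorizontalStrip κ μ ↔ ∀ i, κ.rowLen i ≤ μ.rowLen i ∧ μ.rowLen (i + 1) ≤ κ.rowLen i := by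
  rw [IsHorizontalStrip, le_iff_rowLen_le, forall_and]
  simp only [mem_iff_lt_rowLen]
  exact and_congr_right' (forall_congr' fun i =>
    ⟨fun h => le_of_forall_lt fun j => h j, fun h j hj => hj.trans_le h⟩)

theorem isHorizontalStrip_transpose_iff_rowLen :
    IsHorizontalStrip κ.transpose μ.transpose ↔
      ∀ i, κ.rowLen i ≤ μ.rowLen i ∧ μ.rowLen i ≤ κ.rowLen i + 1 := by
  rw [IsHorizontalStrip, transpose_le_iff, le_iff_rowLen_le, forall_and, forall_comm]
  have hmem (ρ : YoungDiagram) (i j : ℕ) : (i, j) ∈ ρ.transpose ↔ i < ρ.rowLen j := by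
    rw [mem_transpose, Prod.swap_prod_mk, mem_iff_lt_rowLen]
  simp only [hmem]
  refine and_congr_right' (forall_congr' fun i => ⟨fun h => ?_, fun h j hj => by omega⟩)
  by_contra! hlt
  exact (h _ hlt).false

end Diagrams

section SkewSchur

variable {R : Type*} [CommSemiring R] {κ μ : YoungDiagram} {m n M N : ℕ}

open Classical in
/-- The skew Schur function `s_{μ/κ}(x)` in one variable. The argument order follows the growth
`κ ⊆ μ`. -/
noncomputable def stripWeight (x : R) (κ μ : YoungDiagram) : R :=
  if IsHorizontalStrip κ μ then x ^ (μ.card - κ.card) else 0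

theorem stripWeight_self (x : R) (μ : YoungDiagram) : stripWeight x μ μ = 1 := by
  simp [stripWeight, isHorizontalStrip_self]

theorem le_of_stripWeight_ne_zero {x : R} (h : stripWeight x κ μ ≠ 0) : κ ≤ μ := by
  contrapose! h
  exact if_neg fun hs => h hs.1

theorem pow_card_sub_card_eq_prod (x : R) (hμ : μ.rowLen M = 0) (h : κ ≤ μ) :
    x ^ (μ.card - κ.card) = ∏ i ∈ range M, x ^ (μ.rowLen i - κ.rowLen i) := by
  have hrow := le_iff_rowLen_le.1 h
  have hκ : κ.rowLen M = 0 := Nat.eq_zero_of_le_zero (hμ ▸ hrow M)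
  rw [prod_pow_eq_pow_sum, sum_tsub_distrib _ fun i _ => hrow i, card_eq_sum_rowLen hμ,
    card_eq_sum_rowLen hκ]

theorem stripWeight_eq_prod_inner (x : R) (hκ : κ.rowLen M = 0) (hμ : μ.rowLen M = 0) :
    stripWeight x κ μ = ∏ i ∈ range M,
      if μ.rowLen (i + 1) ≤ κ.rowLen i ∧ κ.rowLen i ≤ μ.rowLen i
        then x ^ (μ.rowLen i - κ.rowLen i) else 0 := by
  classical
  rw [prod_ite_zero, stripWeight]
  have hstrip : IsHorizontalStrip κ μ ↔ ∀ i ∈ range M,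
      μ.rowLen (i + 1) ≤ κ.rowLen i ∧ κ.rowLen i ≤ μ.rowLen i := by
    rw [isHorizontalStrip_iff_rowLen]
    refine ⟨fun h i _ => (h i).symm, fun h i => ?_⟩
    rcases lt_or_ge i M with hi | hi
    · exact (h i (mem_range.2 hi)).symm
    · simp [rowLen_eq_zero_of_le hκ hi, rowLen_eq_zero_of_le hμ (hi.trans i.le_succ)]
  exact if_ctx_congr hstrip (fun h => pow_card_sub_card_eq_prod x hμ (hstrip.2 h).1) fun _ => rfl

/-- The length of the row above row `i` of `μ`, where row `0` has a virtual row of length `N`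
above it. -/
def rowLenAbove (N : ℕ) (μ : YoungDiagram) : ℕ → ℕ
  | 0 => N
  | i + 1 => μ.rowLen i

theorem rowLenAbove_antitone (h : μ.rowLen 0 ≤ N) : Antitone (rowLenAbove N μ) :=
  antitone_nat_of_succ_le fun
    | 0 => h
    | i + 1 => μ.rowLen_anti i (i + 1) i.le_succ

theorem stripWeight_eq_prod_outer (x : R) (hκ : κ.rowLen M = 0) (hμ : μ.rowLen M = 0)
    (hN : μ.rowLen 0 ≤ N) :
    stripWeight x κ μ = ∏ i ∈ range M,
      if κ.rowLen i ≤ μ.rowLen i ∧ μ.rowLen i ≤ rowLenAbove N κ i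
        then x ^ (μ.rowLen i - κ.rowLen i) else 0 := by
  classical
  rw [prod_ite_zero, stripWeight]
  have hstrip : IsHorizontalStrip κ μ ↔ ∀ i ∈ range M,
      κ.rowLen i ≤ μ.rowLen i ∧ μ.rowLen i ≤ rowLenAbove N κ i := by
    rw [isHorizontalStrip_iff_rowLen]
    refine ⟨fun h i _ => ⟨(h i).1, ?_⟩, fun h i => ⟨?_, ?_⟩⟩
    · cases i with
      | zero => exact hN
      | succ i => exact (h i).2
    · rcases lt_or_ge i M with hi | hi
      · exact (h i (mem_range.2 hi)).1
      · simp [rowLen_eq_zero_of_le hκ hi]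
    · rcases lt_or_ge (i + 1) M with hi | hi
      · exact (h (i + 1) (mem_range.2 hi)).2
      · simp [rowLen_eq_zero_of_le hμ hi]
  exact if_ctx_congr hstrip (fun h => pow_card_sub_card_eq_prod x hμ (hstrip.2 h).1) fun _ => rfl

theorem stripWeight_transpose_eq_prod (y : R) (hκ : κ.rowLen M = 0) (hμ : μ.rowLen M = 0) :
    stripWeight y κ.transpose μ.transpose = ∏ i ∈ range M,
      if κ.rowLen i ≤ μ.rowLen i ∧ μ.rowLen i ≤ κ.rowLen i + 1
        then y ^ (μ.rowLen i - κ.rowLen i) else 0 := by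
  classical
  rw [prod_ite_zero, stripWeight, card_transpose, card_transpose]
  have hstrip : IsHorizontalStrip κ.transpose μ.transpose ↔ ∀ i ∈ range M,
      κ.rowLen i ≤ μ.rowLen i ∧ μ.rowLen i ≤ κ.rowLen i + 1 := by
    rw [isHorizontalStrip_transpose_iff_rowLen]
    refine ⟨fun h i _ => h i, fun h i => ?_⟩
    rcases lt_or_ge i M with hi | hi
    · exact h i (mem_range.2 hi)
    · simp [rowLen_eq_zero_of_le hκ hi, rowLen_eq_zero_of_le hμ hi]
  exact if_ctx_congr hstrip
    (fun h => pow_card_sub_card_eq_prod y hμ (transpose_le_iff.1 (hstrip.2 h).1)) fun _ => rfl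

theorem sum_prod_rowLen (f : ℕ → ℕ → R)
    (hf : ∀ i a b, f i a ≠ 0 → f (i + 1) b ≠ 0 → b ≤ a) :
    ∑ μ ∈ Iic (rect m n), ∏ i ∈ range m, f i (μ.rowLen i) =
      ∏ i ∈ range m, ∑ a ∈ range (n + 1), f i a := by
  rw [← Fin.prod_univ_eq_prod_range, prod_univ_sum]
  refine sum_of_injOn (fun μ (i : Fin m) => μ.rowLen i) ?_ ?_ ?_ ?_
  · intro μ hμ ν hν h
    have hμ0 := (le_rect_iff.1 (mem_Iic.1 hμ)).1
    have hν0 := (le_rect_iff.1 (mem_Iic.1 hν)).1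
    have hrow (i : ℕ) : μ.rowLen i = ν.rowLen i := by
      rcases lt_or_ge i m with hi | hi
      · exact congrFun h ⟨i, hi⟩
      · rw [rowLen_eq_zero_of_le hμ0 hi, rowLen_eq_zero_of_le hν0 hi]
    exact le_antisymm (le_iff_rowLen_le.2 fun i => (hrow i).le)
      (le_iff_rowLen_le.2 fun i => (hrow i).ge)
  · intro μ hμ
    have := (le_rect_iff.1 (mem_Iic.1 hμ)).2
    simpa [Nat.lt_succ_iff] using fun i : Fin m => this i
  · intro v hv hnot
    by_contra hprod
    have hne (i : Fin m) : f i (v i) ≠ 0 := fun h0 => hprod (prod_eq_zero (mem_univ i) h0)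
    have hanti : Antitone v := by
      cases m with
      | zero => exact fun i => i.elim0
      | succ m => exact Fin.antitone_iff_succ_le.2 fun i => hf i _ _ (hne i.castSucc) (hne i.succ)
    obtain ⟨μ, hrow, hm⟩ := exists_rowLen_eq v hanti
    refine hnot ⟨μ, mem_coe.2 (mem_Iic.2 (le_rect_iff.2 ⟨hm, fun i => ?_⟩)), funext hrow⟩
    rcases lt_or_ge i m with hi | hi
    · have hvi := mem_range.1 (Fintype.mem_piFinset.1 hv ⟨i, hi⟩)
      exact (hrow ⟨i, hi⟩).trans_le (Nat.lt_succ_iff.1 hvi)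
    · simp [rowLen_eq_zero_of_le hm hi]
  · exact fun μ _ => (Fin.prod_univ_eq_prod_range (fun i => f i (μ.rowLen i)) m).symm

end SkewSchur

section RowExchange

variable {R : Type*} [CommSemiring R]

/-- The contribution of a single row of `ρ` to the sum `∑_ρ s_{ρ/μ}(x) s_{ρ'/ν'}(y)`, where the
row has length `b` in `ν` and `a` in `μ`, and the row above it has length `A` in `μ`. The two terms
are those of a row of `ρ` of length `b` and `b + 1`. -/
def outerRowSum (x y : R) (A a b : ℕ) : R :=
  (if a ≤ b ∧ b ≤ A then x ^ (b - a) else 0) +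
    (if a ≤ b + 1 ∧ b + 1 ≤ A then x ^ (b + 1 - a) * y else 0)

/-- The contribution of a single row of `κ` to the sum `∑_κ s_{ν/κ}(x) s_{μ'/κ'}(y)`, where the row
has length `b` in `ν` and `a` in `μ`, and the row below it has length `b'` in `ν`. The two terms
are those of a row of `κ` of length `a` and `a - 1`; the bounds in the second one are shifted by `1`
so that it vanishes for `a = 0`. -/
def innerRowSum (x y : R) (b b' a : ℕ) : R :=
  (if b' ≤ a ∧ a ≤ b then x ^ (b - a) else 0) +
    (if b' + 1 ≤ a ∧ a ≤ b + 1 then x ^ (b + 1 - a) * y else 0)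

/-- The factor that turns an outer row sum into an inner one when it moves past a row. It is `1`
below the last row and `1 + t` above the first, which is where the factor `1 + x * y` of the skew
identity comes from. -/
def cornerFactor (t : R) (a b : ℕ) : R :=
  (if b ≤ a then 1 else 0) + (if b + 1 ≤ a then t else 0)

theorem sum_range_outer_row (x y : R) {A a b N : ℕ} (hb : b + 1 < N) :
    ∑ l ∈ range N, (if a ≤ l ∧ l ≤ A then x ^ (l - a) else 0) *
      (if b ≤ l ∧ l ≤ b + 1 then y ^ (l - b) else 0) = outerRowSum x y A a b := by
  rw [sum_eq_add_of_mem b (b + 1) (mem_range.2 (by omega)) (mem_range.2 hb) (by omega)]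
  · simp [outerRowSum, ite_mul]
  · intro l _ hl
    rw [if_neg (show ¬(b ≤ l ∧ l ≤ b + 1) by omega), mul_zero]

theorem sum_range_inner_row (x y : R) {b b' a N : ℕ} (ha : a < N) :
    ∑ l ∈ range N, (if b' ≤ l ∧ l ≤ b then x ^ (b - l) else 0) *
      (if l ≤ a ∧ a ≤ l + 1 then y ^ (a - l) else 0) = innerRowSum x y b b' a := by
  cases a with
  | zero =>
    rw [sum_eq_single_of_mem 0 (mem_range.2 ha)]
    · simp [innerRowSum]
    · intro l _ hl
      rw [if_neg (show ¬(l ≤ 0 ∧ 0 ≤ l + 1) by omega), mul_zero]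
  | succ a =>
    rw [sum_eq_add_of_mem (a + 1) a (mem_range.2 ha) (mem_range.2 (by omega)) (by omega)]
    · simp [innerRowSum, ite_mul]
    · intro l _ hl
      rw [if_neg (show ¬(l ≤ a + 1 ∧ a + 1 ≤ l + 1) by omega), mul_zero]

theorem outerRowSum_eq_cornerFactor (x y : R) {A a b : ℕ} (h : a ≤ b) :
    outerRowSum x y A a b = x ^ (b - a) * cornerFactor (x * y) A b := by
  simp only [outerRowSum, cornerFactor, h, h.trans b.le_succ, true_and, mul_add, mul_ite, mul_one,
    mul_zero, Nat.succ_sub h, pow_succ, mul_assoc]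

theorem innerRowSum_eq_cornerFactor (x y : R) {b b' a : ℕ} (h : a ≤ b) :
    innerRowSum x y b b' a = x ^ (b - a) * cornerFactor (x * y) a b' := by
  simp only [innerRowSum, cornerFactor, h, h.trans b.le_succ, and_true, mul_add, mul_ite, mul_one,
    mul_zero, Nat.succ_sub h, pow_succ, mul_assoc]

theorem outerRowSum_mul_cornerFactor (x y : R) {A a b b' : ℕ} (ha : a ≤ A) (hb : b' ≤ b) :
    outerRowSum x y A a b * cornerFactor (x * y) a b' =
      cornerFactor (x * y) A b * innerRowSum x y b b' a := by
  rcases le_or_gt a b with h | h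
  · rw [outerRowSum_eq_cornerFactor x y h, innerRowSum_eq_cornerFactor x y h]
    ring
  rcases (Nat.succ_le_of_lt h).eq_or_lt with rfl | h
  · have hA : b ≤ A := b.le_succ.trans ha
    simp [outerRowSum, innerRowSum, cornerFactor, ha, hA, hb, hb.trans b.le_succ, mul_comm]
  · have houter : outerRowSum x y A a b = 0 := by
      rw [outerRowSum, if_neg (by omega), if_neg (by omega), add_zero]
    have hinner : innerRowSum x y b b' a = 0 := by
      rw [innerRowSum, if_neg (by omega), if_neg (by omega), add_zero]
    rw [houter, hinner, zero_mul, mul_zero]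

theorem prod_outerRowSum_mul_cornerFactor (x y : R) {a b : ℕ → ℕ} (ha : Antitone a)
    (hb : Antitone b) (k : ℕ) :
    (∏ i ∈ range k, outerRowSum x y (a i) (a (i + 1)) (b i)) * cornerFactor (x * y) (a k) (b k) =
      cornerFactor (x * y) (a 0) (b 0) *
        ∏ i ∈ range k, innerRowSum x y (b i) (b (i + 1)) (a (i + 1)) := by
  induction k with
  | zero => simp
  | succ k ih =>
    rw [prod_range_succ, mul_assoc,
      outerRowSum_mul_cornerFactor x y (ha k.le_succ) (hb k.le_succ), ← mul_assoc, ih,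
      prod_range_succ, mul_assoc]

end RowExchange

section LocalRule

variable {R : Type*} [CommSemiring R] {μ ν : YoungDiagram} {m n : ℕ}

theorem sum_stripWeight_outer (x y : R) (hμ : μ.rowLen m = 0) (hν : ν ≤ rect m n) :
    ∑ ρ ∈ Iic (rect m (n + 1)), stripWeight x μ ρ * stripWeight y ν.transpose ρ.transpose =
      ∏ i ∈ range m,
        outerRowSum x y (rowLenAbove (n + 1) μ i) (μ.rowLen i) (ν.rowLen i) := by
  obtain ⟨hν0, hνn⟩ := le_rect_iff.1 hν
  have hweight (ρ : YoungDiagram) (hρ : ρ ∈ Iic (rect m (n + 1))) :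
      stripWeight x μ ρ * stripWeight y ν.transpose ρ.transpose = ∏ i ∈ range m,
        (if μ.rowLen i ≤ ρ.rowLen i ∧ ρ.rowLen i ≤ rowLenAbove (n + 1) μ i
          then x ^ (ρ.rowLen i - μ.rowLen i) else 0) *
        (if ν.rowLen i ≤ ρ.rowLen i ∧ ρ.rowLen i ≤ ν.rowLen i + 1
          then y ^ (ρ.rowLen i - ν.rowLen i) else 0) := by
    obtain ⟨hρ0, hρn⟩ := le_rect_iff.1 (mem_Iic.1 hρ)
    rw [stripWeight_eq_prod_outer x hμ hρ0 (hρn 0), stripWeight_transpose_eq_prod y hν0 hρ0,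
      prod_mul_distrib]
  rw [sum_congr rfl hweight, sum_prod_rowLen fun i l =>
    (if μ.rowLen i ≤ l ∧ l ≤ rowLenAbove (n + 1) μ i then x ^ (l - μ.rowLen i) else 0) *
      (if ν.rowLen i ≤ l ∧ l ≤ ν.rowLen i + 1 then y ^ (l - ν.rowLen i) else 0)]
  · exact prod_congr rfl fun i _ => sum_range_outer_row x y (by have := hνn i; omega)
  · intro i a b ha hb
    have ha := (ite_ne_right_iff.1 (left_ne_zero_of_mul ha)).1
    have hb := (ite_ne_right_iff.1 (left_ne_zero_of_mul hb)).1
    exact hb.2.trans ha.1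

theorem sum_stripWeight_inner (x y : R) (hμ : μ ≤ rect m n) (hν : ν.rowLen m = 0) :
    ∑ κ ∈ Iic (rect m n), stripWeight x κ ν * stripWeight y κ.transpose μ.transpose =
      ∏ i ∈ range m, innerRowSum x y (ν.rowLen i) (ν.rowLen (i + 1)) (μ.rowLen i) := by
  obtain ⟨hμ0, hμn⟩ := le_rect_iff.1 hμ
  have hweight (κ : YoungDiagram) (hκ : κ ∈ Iic (rect m n)) :
      stripWeight x κ ν * stripWeight y κ.transpose μ.transpose = ∏ i ∈ range m,
        (if ν.rowLen (i + 1) ≤ κ.rowLen i ∧ κ.rowLen i ≤ ν.rowLen i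
          then x ^ (ν.rowLen i - κ.rowLen i) else 0) *
        (if κ.rowLen i ≤ μ.rowLen i ∧ μ.rowLen i ≤ κ.rowLen i + 1
          then y ^ (μ.rowLen i - κ.rowLen i) else 0) := by
    obtain ⟨hκ0, -⟩ := le_rect_iff.1 (mem_Iic.1 hκ)
    rw [stripWeight_eq_prod_inner x hκ0 hν, stripWeight_transpose_eq_prod y hκ0 hμ0,
      prod_mul_distrib]
  rw [sum_congr rfl hweight, sum_prod_rowLen fun i l =>
    (if ν.rowLen (i + 1) ≤ l ∧ l ≤ ν.rowLen i then x ^ (ν.rowLen i - l) else 0) *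
      (if l ≤ μ.rowLen i ∧ μ.rowLen i ≤ l + 1 then y ^ (μ.rowLen i - l) else 0)]
  · exact prod_congr rfl fun i _ => sum_range_inner_row x y (Nat.lt_succ_iff.2 (hμn i))
  · intro i a b ha hb
    have ha := (ite_ne_right_iff.1 (left_ne_zero_of_mul ha)).1
    have hb := (ite_ne_right_iff.1 (left_ne_zero_of_mul hb)).1
    exact hb.2.trans ha.1

theorem sum_stripWeight_mul_stripWeight_transpose (x y : R) (hμ : μ ≤ rect m (n + 1))
    (hν : ν ≤ rect (m + 1) n) :
    ∑ ρ ∈ Iic (rect (m + 1) (n + 1)),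
        stripWeight x μ ρ * stripWeight y ν.transpose ρ.transpose =
      (1 + x * y) *
        ∑ κ ∈ Iic (rect m n), stripWeight x κ ν * stripWeight y κ.transpose μ.transpose := by
  obtain ⟨hμ0, hμn⟩ := le_rect_iff.1 hμ
  obtain ⟨hν0, hνn⟩ := le_rect_iff.1 hν
  have hinner : ∑ κ ∈ Iic (rect m n), stripWeight x κ ν * stripWeight y κ.transpose μ.transpose =
      ∏ i ∈ range (m + 1),
        innerRowSum x y (ν.rowLen i) (ν.rowLen (i + 1)) (rowLenAbove (n + 1) μ (i + 1)) := by
    refine Eq.trans ?_ (sum_stripWeight_inner x y (hμ.trans (rect_mono m.le_succ le_rfl)) hν0)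
    refine sum_subset (Iic_subset_Iic.2 (rect_mono m.le_succ n.le_succ)) fun κ _ hκ => ?_
    by_contra hne
    have hκν := le_of_stripWeight_ne_zero (left_ne_zero_of_mul hne)
    have hκμ := transpose_le_iff.1 (le_of_stripWeight_ne_zero (right_ne_zero_of_mul hne))
    refine hκ (mem_Iic.2 (le_rect_iff.2 ⟨?_, fun i => ?_⟩))
    · exact Nat.eq_zero_of_le_zero (hμ0 ▸ le_iff_rowLen_le.1 hκμ m)
    · exact (le_iff_rowLen_le.1 hκν i).trans (hνn i)
  have hstart : cornerFactor (x * y) (rowLenAbove (n + 1) μ 0) (ν.rowLen 0) = 1 + x * y := by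
    simp [cornerFactor, rowLenAbove, hνn 0, (hνn 0).trans n.le_succ]
  have hend : cornerFactor (x * y) (rowLenAbove (n + 1) μ (m + 1)) (ν.rowLen (m + 1)) = 1 := by
    simp [cornerFactor, rowLenAbove, hμ0, hν0]
  rw [sum_stripWeight_outer x y (rowLen_eq_zero_of_le hμ0 m.le_succ) hν, hinner, ← hstart,
    ← prod_outerRowSum_mul_cornerFactor x y (rowLenAbove_antitone (hμn 0))
      (fun i j => ν.rowLen_anti i j) (m + 1), hend, mul_one]
  rfl

end LocalRule

section Tableaux

variable {κ μ : YoungDiagram} {k : ℕ}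

theorem finite_setOf_entry_lt (μ : YoungDiagram) (k : ℕ) :
    {T : SemistandardYoungTableau μ | ∀ i j, (i, j) ∈ μ → T i j < k}.Finite := by
  refine Set.Finite.of_injOn (f := fun T (c : μ.cells) => T c.1.1 c.1.2)
    (t := Set.univ.pi fun _ => Set.Iio k) ?_ ?_ (Set.Finite.pi fun _ => Set.finite_Iio k)
  · exact fun T hT c _ => hT _ _ ((mem_cells c.1).1 c.2)
  · intro T _ T' _ h
    ext i j
    by_cases hc : (i, j) ∈ μ
    · exact congrFun h ⟨(i, j), (mem_cells _).2 hc⟩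
    · rw [T.zeros hc, T'.zeros hc]

/-- The semistandard tableaux of shape `μ` with entries in `{0, …, k - 1}`. -/
noncomputable def boundedTableaux (μ : YoungDiagram) (k : ℕ) :
    Finset (SemistandardYoungTableau μ) :=
  (finite_setOf_entry_lt μ k).toFinset

theorem mem_boundedTableaux {T : SemistandardYoungTableau μ} :
    T ∈ boundedTableaux μ k ↔ ∀ i j, (i, j) ∈ μ → T i j < k :=
  Set.Finite.mem_toFinset _

theorem card_boundedTableaux (μ : YoungDiagram) (k : ℕ) :
    (boundedTableaux μ k).card = ssytCount μ k :=
  (Set.ncard_eq_toFinset_card _ (finite_setOf_entry_lt μ k)).symm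

theorem row_le_entry (T : SemistandardYoungTableau μ) {i j : ℕ} (h : (i, j) ∈ μ) : i ≤ T i j := by
  induction i with
  | zero => exact Nat.zero_le _
  | succ i ih =>
    exact (ih (μ.up_left_mem i.le_succ le_rfl h)).trans_lt (T.col_strict i.lt_succ_self h)

/-- The shape formed by the entries of `T` smaller than `k`. -/
def shapeLT (k : ℕ) (T : SemistandardYoungTableau μ) : YoungDiagram where
  cells := μ.cells.filter fun c => T c.1 c.2 < k
  isLowerSet := by
    rintro c d hdc hc
    simp only [coe_filter, Set.mem_ofPred_eq, mem_cells] at hc ⊢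
    have hmem : (d.1, c.2) ∈ μ := μ.up_left_mem hdc.1 le_rfl hc.1
    exact ⟨μ.up_left_mem hdc.1 hdc.2 hc.1,
      ((T.row_weak_of_le hdc.2 hmem).trans (T.col_weak hdc.1 hc.1)).trans_lt hc.2⟩

theorem mem_shapeLT {T : SemistandardYoungTableau μ} {i j : ℕ} :
    (i, j) ∈ shapeLT k T ↔ (i, j) ∈ μ ∧ T i j < k := by
  simp [← mem_cells, shapeLT]

theorem isHorizontalStrip_shapeLT {T : SemistandardYoungTableau μ}
    (hT : T ∈ boundedTableaux μ (k + 1)) : IsHorizontalStrip (shapeLT k T) μ := by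
  refine ⟨fun c hc => (mem_shapeLT.1 hc).1, fun i j hc => mem_shapeLT.2 ?_⟩
  have hlt := mem_boundedTableaux.1 hT _ _ hc
  exact ⟨μ.up_left_mem i.le_succ le_rfl hc,
    (T.col_strict i.lt_succ_self hc).trans_le (Nat.lt_succ_iff.1 hlt)⟩

/-- The restriction of a tableau to a smaller shape. -/
def restrictTableau (h : κ ≤ μ) (T : SemistandardYoungTableau μ) :
    SemistandardYoungTableau κ where
  entry i j := if (i, j) ∈ κ then T i j else 0
  row_weak' hj hc := by
    rw [if_pos hc, if_pos (κ.up_left_mem le_rfl hj.le hc)]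
    exact T.row_weak hj (h hc)
  col_strict' hi hc := by
    rw [if_pos hc, if_pos (κ.up_left_mem hi.le le_rfl hc)]
    exact T.col_strict hi (h hc)
  zeros' hc := if_neg hc

theorem restrictTableau_apply (h : κ ≤ μ) (T : SemistandardYoungTableau μ) {i j : ℕ}
    (hc : (i, j) ∈ κ) : restrictTableau h T i j = T i j :=
  if_pos hc

/-- The extension of a tableau with entries smaller than `k` by the entry `k` along a horizontal
strip. -/
def extendTableau (h : IsHorizontalStrip κ μ) (T : SemistandardYoungTableau κ)
    (hT : T ∈ boundedTableaux κ k) : SemistandardYoungTableau μ where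
  entry i j := if (i, j) ∈ κ then T i j else if (i, j) ∈ μ then k else 0
  row_weak' {i j₁ j₂} hj hc := by
    by_cases h₂ : (i, j₂) ∈ κ
    · rw [if_pos h₂, if_pos (κ.up_left_mem le_rfl hj.le h₂)]
      exact T.row_weak hj h₂
    · rw [if_neg h₂, if_pos hc, if_pos (μ.up_left_mem le_rfl hj.le hc)]
      split_ifs with h₁
      · exact (mem_boundedTableaux.1 hT _ _ h₁).le
      · exact le_rfl
  col_strict' {i₁ i₂ j} hi hc := by
    have h₁ : (i₁, j) ∈ κ := h.2 _ _ (μ.up_left_mem (Nat.succ_le_of_lt hi) le_rfl hc)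
    rw [if_pos h₁]
    split_ifs with h₂
    · exact T.col_strict hi h₂
    · exact mem_boundedTableaux.1 hT _ _ h₁
  zeros' hc := by rw [if_neg (fun hκ => hc (h.1 hκ)), if_neg hc]

theorem extendTableau_apply (h : IsHorizontalStrip κ μ) {T : SemistandardYoungTableau κ}
    (hT : T ∈ boundedTableaux κ k) {i j : ℕ} (hc : (i, j) ∈ κ) :
    extendTableau h T hT i j = T i j :=
  if_pos hc

theorem extendTableau_apply_of_notMem (h : IsHorizontalStrip κ μ) {T : SemistandardYoungTableau κ}
    (hT : T ∈ boundedTableaux κ k) {i j : ℕ} (hμ : (i, j) ∈ μ) (hκ : (i, j) ∉ κ) :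
    extendTableau h T hT i j = k :=
  (if_neg hκ).trans (if_pos hμ)

theorem extendTableau_mem_boundedTableaux (h : IsHorizontalStrip κ μ)
    {T : SemistandardYoungTableau κ} (hT : T ∈ boundedTableaux κ k) :
    extendTableau h T hT ∈ boundedTableaux μ (k + 1) := by
  refine mem_boundedTableaux.2 fun i j hμ => ?_
  by_cases hκ : (i, j) ∈ κ
  · rw [extendTableau_apply h hT hκ]
    exact (mem_boundedTableaux.1 hT i j hκ).trans k.lt_succ_self
  · rw [extendTableau_apply_of_notMem h hT hμ hκ]
    exact k.lt_succ_self

theorem shapeLT_extendTableau (h : IsHorizontalStrip κ μ) {T : SemistandardYoungTableau κ}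
    (hT : T ∈ boundedTableaux κ k) : shapeLT k (extendTableau h T hT) = κ := by
  ext ⟨i, j⟩
  rw [mem_cells, mem_cells, mem_shapeLT]
  constructor
  · rintro ⟨hμ, hlt⟩
    by_contra hκ
    exact hlt.ne (extendTableau_apply_of_notMem h hT hμ hκ)
  · intro hκ
    rw [extendTableau_apply h hT hκ]
    exact ⟨h.1 hκ, mem_boundedTableaux.1 hT i j hκ⟩

theorem restrictTableau_extendTableau (h : IsHorizontalStrip κ μ) {T : SemistandardYoungTableau κ}
    (hT : T ∈ boundedTableaux κ k) : restrictTableau h.1 (extendTableau h T hT) = T := by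
  ext i j
  by_cases hκ : (i, j) ∈ κ
  · rw [restrictTableau_apply h.1 _ hκ, extendTableau_apply h hT hκ]
  · rw [T.zeros hκ, SemistandardYoungTableau.zeros _ hκ]

theorem restrictTableau_mem_boundedTableaux {T : SemistandardYoungTableau μ}
    (h : shapeLT k T ≤ μ) : restrictTableau h T ∈ boundedTableaux (shapeLT k T) k := by
  refine mem_boundedTableaux.2 fun i j hc => ?_
  rw [restrictTableau_apply h T hc]
  exact (mem_shapeLT.1 hc).2

theorem entry_eq_of_notMem_shapeLT {T : SemistandardYoungTableau μ}
    (hT : T ∈ boundedTableaux μ (k + 1)) {i j : ℕ} (hμ : (i, j) ∈ μ) (hc : (i, j) ∉ shapeLT k T) :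
    T i j = k :=
  (Nat.lt_succ_iff.1 (mem_boundedTableaux.1 hT i j hμ)).antisymm
    (not_lt.1 fun hlt => hc (mem_shapeLT.2 ⟨hμ, hlt⟩))

theorem extendTableau_restrictTableau {T : SemistandardYoungTableau μ}
    (hT : T ∈ boundedTableaux μ (k + 1)) (h : IsHorizontalStrip (shapeLT k T) μ) :
    extendTableau h (restrictTableau h.1 T) (restrictTableau_mem_boundedTableaux h.1) = T := by
  ext i j
  by_cases hμ : (i, j) ∈ μ
  · by_cases hc : (i, j) ∈ shapeLT k T
    · rw [extendTableau_apply h _ hc, restrictTableau_apply h.1 T hc]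
    · rw [extendTableau_apply_of_notMem h _ hμ hc, entry_eq_of_notMem_shapeLT hT hμ hc]
  · rw [T.zeros hμ, SemistandardYoungTableau.zeros _ hμ]

end Tableaux

section Schur

variable {R : Type*} [CommSemiring R] {κ μ : YoungDiagram} {k m n : ℕ}

/-- The monomial `∏ x_T(c)` of a tableau `T`. -/
def tableauWeight (x : ℕ → R) (T : SemistandardYoungTableau μ) : R :=
  ∏ c ∈ μ.cells, x (T c.1 c.2)

/-- The Schur function `s_μ` in the variables `x 0, …, x (k - 1)`. -/
noncomputable def schur (x : ℕ → R) (k : ℕ) (μ : YoungDiagram) : R :=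
  ∑ T ∈ boundedTableaux μ k, tableauWeight x T

theorem schur_const (t : R) (k : ℕ) (μ : YoungDiagram) :
    schur (fun _ => t) k μ = ssytCount μ k * t ^ μ.card := by
  simp [schur, tableauWeight, card_boundedTableaux]

theorem schur_bot (x : ℕ → R) (k : ℕ) : schur x k ⊥ = 1 := by
  have hunique (T T' : SemistandardYoungTableau ⊥) : T = T' := by
    ext i j
    rw [T.zeros (notMem_bot _), T'.zeros (notMem_bot _)]
  have hmem : (default : SemistandardYoungTableau ⊥) ∈ boundedTableaux ⊥ k :=
    mem_boundedTableaux.2 fun i j h => absurd h (notMem_bot _)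
  rw [schur, sum_eq_single_of_mem default hmem fun T _ hT => absurd (hunique T _) hT]
  exact prod_empty

theorem schur_eq_zero_of_mem (x : ℕ → R) (h : (k, 0) ∈ μ) : schur x k μ = 0 := by
  refine sum_eq_zero fun T hT => ?_
  exact absurd (mem_boundedTableaux.1 hT k 0 h) (row_le_entry T h).not_gt

theorem tableauWeight_eq_pow_mul (x : ℕ → R) {T : SemistandardYoungTableau μ}
    (hT : T ∈ boundedTableaux μ (k + 1)) (h : shapeLT k T ≤ μ) :
    tableauWeight x T =
      x k ^ (μ.card - (shapeLT k T).card) * tableauWeight x (restrictTableau h T) := by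
  rw [tableauWeight, ← prod_sdiff (cells_subset_iff.2 h)]
  congr 1
  · rw [YoungDiagram.card, YoungDiagram.card, ← card_sdiff_of_subset (cells_subset_iff.2 h)]
    refine prod_eq_pow_card fun c hc => ?_
    obtain ⟨hμ, hκ⟩ := mem_sdiff.1 hc
    rw [entry_eq_of_notMem_shapeLT hT ((mem_cells c).1 hμ) (hκ ∘ (mem_cells c).2)]
  · exact prod_congr rfl fun c hc => by rw [restrictTableau_apply h T ((mem_cells c).1 hc)]

open Classical in
theorem sum_tableauWeight_shapeLT (x : ℕ → R) (h : IsHorizontalStrip κ μ) :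
    ∑ T ∈ boundedTableaux μ (k + 1) with shapeLT k T = κ, tableauWeight x T =
      x k ^ (μ.card - κ.card) * schur x k κ := by
  rw [schur, mul_sum]
  refine sum_bij' (fun T _ => restrictTableau h.1 T)
    (fun S hS => extendTableau h S hS) ?_ ?_ ?_ ?_ ?_
  · intro T hT
    obtain ⟨-, rfl⟩ := mem_filter.1 hT
    exact restrictTableau_mem_boundedTableaux h.1
  · exact fun S hS => mem_filter.2
      ⟨extendTableau_mem_boundedTableaux h hS, shapeLT_extendTableau h hS⟩
  · intro T hT
    obtain ⟨hbound, rfl⟩ := mem_filter.1 hT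
    exact extendTableau_restrictTableau hbound h
  · exact fun S hS => restrictTableau_extendTableau h hS
  · intro T hT
    obtain ⟨hbound, rfl⟩ := mem_filter.1 hT
    exact tableauWeight_eq_pow_mul x hbound h.1

theorem schur_succ (x : ℕ → R) (k : ℕ) (μ : YoungDiagram) :
    schur x (k + 1) μ = ∑ κ ∈ Iic μ, stripWeight (x k) κ μ * schur x k κ := by
  classical
  rw [schur, ← sum_fiberwise_of_maps_to (g := shapeLT k) (t := Iic μ)
    fun T hT => mem_Iic.2 (isHorizontalStrip_shapeLT hT).1]
  refine sum_congr rfl fun κ _ => ?_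
  rw [stripWeight]
  split_ifs with h
  · exact sum_tableauWeight_shapeLT x h
  · rw [zero_mul, filter_eq_empty_iff.2, sum_empty]
    rintro T hT rfl
    exact h (isHorizontalStrip_shapeLT hT)

theorem schur_succ_of_le_rect (x : ℕ → R) (hμ : μ ≤ rect (m + 1) n) :
    schur x (m + 1) μ = ∑ κ ∈ Iic (rect m n), stripWeight (x m) κ μ * schur x m κ := by
  rw [schur_succ]
  trans ∑ κ ∈ Iic (rect (m + 1) n), stripWeight (x m) κ μ * schur x m κ
  · refine sum_subset (Iic_subset_Iic.2 hμ) fun κ _ hκ => ?_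
    by_contra hne
    exact hκ (mem_Iic.2 (le_of_stripWeight_ne_zero (left_ne_zero_of_mul hne)))
  · refine (sum_subset (Iic_subset_Iic.2 (rect_mono m.le_succ le_rfl)) fun κ hκ hκm => ?_).symm
    have hm : κ.rowLen m ≠ 0 := fun h0 =>
      hκm (mem_Iic.2 (le_rect_iff.2 ⟨h0, (le_rect_iff.1 (mem_Iic.1 hκ)).2⟩))
    rw [schur_eq_zero_of_mem x (mem_iff_lt_rowLen.2 (Nat.pos_of_ne_zero hm)), mul_zero]

theorem schur_transpose_succ_of_le_rect (y : ℕ → R) (hμ : μ ≤ rect m (n + 1)) :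
    schur y (n + 1) μ.transpose = ∑ ν ∈ Iic (rect m n),
      stripWeight (y n) ν.transpose μ.transpose * schur y n ν.transpose := by
  rw [schur_succ_of_le_rect (n := m) y (transpose_rect m (n + 1) ▸ transpose_le_iff.2 hμ)]
  refine sum_nbij' YoungDiagram.transpose YoungDiagram.transpose ?_ ?_ ?_ ?_ ?_
  · exact fun κ hκ => mem_Iic.2 (transpose_rect n m ▸ transpose_le_iff.2 (mem_Iic.1 hκ))
  · exact fun κ hκ => mem_Iic.2 (transpose_rect m n ▸ transpose_le_iff.2 (mem_Iic.1 hκ))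
  · exact fun κ _ => κ.transpose_transpose
  · exact fun κ _ => κ.transpose_transpose
  · exact fun κ _ => by rw [transpose_transpose]

theorem dual_pieri (x : ℕ → R) (y : R) {ν : YoungDiagram} (hν : ν ≤ rect m n) :
    ∑ μ ∈ Iic (rect m (n + 1)), stripWeight y ν.transpose μ.transpose * schur x m μ =
      (∏ i ∈ range m, (1 + x i * y)) * schur x m ν := by
  induction m generalizing ν with
  | zero =>
    rw [rect_zero_left, le_bot_iff] at hν
    simp [rect_zero_left, Iic_bot_eq_singleton, hν, stripWeight_self]
  | succ m ih =>
    calc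
      _ = ∑ ρ ∈ Iic (rect (m + 1) (n + 1)), ∑ μ ∈ Iic (rect m (n + 1)),
            stripWeight (x m) μ ρ * stripWeight y ν.transpose ρ.transpose * schur x m μ := by
        refine sum_congr rfl fun ρ hρ => ?_
        rw [schur_succ_of_le_rect x (mem_Iic.1 hρ), mul_sum]
        exact sum_congr rfl fun μ _ => by ring
      _ = ∑ μ ∈ Iic (rect m (n + 1)), ∑ κ ∈ Iic (rect m n), (1 + x m * y) *
            (stripWeight (x m) κ ν * (stripWeight y κ.transpose μ.transpose * schur x m μ)) := by
        rw [sum_comm]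
        refine sum_congr rfl fun μ hμ => ?_
        rw [← sum_mul, sum_stripWeight_mul_stripWeight_transpose _ _ (mem_Iic.1 hμ) hν, mul_assoc,
          sum_mul, mul_sum]
        exact sum_congr rfl fun κ _ => by ring
      _ = (1 + x m * y) * ∑ κ ∈ Iic (rect m n),
            stripWeight (x m) κ ν * ((∏ i ∈ range m, (1 + x i * y)) * schur x m κ) := by
        rw [sum_comm, mul_sum]
        exact sum_congr rfl fun κ hκ => by rw [← ih (mem_Iic.1 hκ), mul_sum, mul_sum]
      _ = (∏ i ∈ range (m + 1), (1 + x i * y)) * schur x (m + 1) ν := by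
        rw [schur_succ_of_le_rect x hν, prod_range_succ, mul_sum, mul_sum]
        exact sum_congr rfl fun κ _ => by ring

theorem dual_cauchy (x y : ℕ → R) (m n : ℕ) :
    ∑ μ ∈ Iic (rect m n), schur x m μ * schur y n μ.transpose =
      ∏ j ∈ range n, ∏ i ∈ range m, (1 + x i * y j) := by
  induction n with
  | zero => simp [rect_zero_right, Iic_bot_eq_singleton, transpose_bot, schur_bot]
  | succ n ih =>
    calc
      _ = ∑ μ ∈ Iic (rect m (n + 1)), ∑ ν ∈ Iic (rect m n), schur y n ν.transpose *
            (stripWeight (y n) ν.transpose μ.transpose * schur x m μ) := by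
        refine sum_congr rfl fun μ hμ => ?_
        rw [schur_transpose_succ_of_le_rect y (mem_Iic.1 hμ), mul_sum]
        exact sum_congr rfl fun ν _ => by ring
      _ = ∑ ν ∈ Iic (rect m n), schur y n ν.transpose *
            ((∏ i ∈ range m, (1 + x i * y n)) * schur x m ν) := by
        rw [sum_comm]
        exact sum_congr rfl fun ν hν => by rw [← mul_sum, dual_pieri x _ (mem_Iic.1 hν)]
      _ = ∏ j ∈ range (n + 1), ∏ i ∈ range m, (1 + x i * y j) := by
        rw [prod_range_succ, ← ih, sum_mul]
        exact sum_congr rfl fun ν _ => by ring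

end Schur

/-- skew Howe duality on dimensions:
`∑_{λ ⊆ n^m, |λ| = p} s_λ(1^m) s_{λ'}(1^n) = C(mn, p)`. -/
theorem sum_ssyt_products (m n p : ℕ) :
    (∑ᶠ (μ : YoungDiagram) (_ : μ ≤ rect m n ∧ μ.card = p),
        ssytCount μ m * ssytCount μ.transpose n) = (m * n).choose p := by
  have hcauchy := dual_cauchy (fun _ => (Polynomial.X : Polynomial ℕ)) (fun _ => 1) m n
  calc
    _ = ∑ μ ∈ Iic (rect m n) with μ.card = p, ssytCount μ m * ssytCount μ.transpose n :=
      finsum_cond_eq_sum_of_cond_iff _ fun _ => by simp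
    _ = (∑ μ ∈ Iic (rect m n), schur (fun _ => (Polynomial.X : Polynomial ℕ)) m μ *
          schur (fun _ => 1) n μ.transpose).coeff p := by
      rw [Polynomial.finsetSum_coeff, sum_filter]
      refine sum_congr rfl fun μ _ => ?_
      simp [schur_const, Polynomial.coeff_X_pow, Polynomial.coeff_mul_natCast, eq_comm]
    _ = ((1 + Polynomial.X : Polynomial ℕ) ^ (m * n)).coeff p := by
      simp [hcauchy, pow_mul]
    _ = (m * n).choose p := by simp [Polynomial.coeff_one_add_X_pow]
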